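/- arXiv:2412.12003 — 2 statements merged into one kernel-verified Lean document; each statement's English description precedes it below -/
import Mathlib

section
/- (Weak Kodaira decomposition) Let (H_•, P_•) be a Hilbert complex of length n. Then for each 0 ≤ k ≤ n, the Hilbert space H_k is the orthogonal direct sum H_k = Ĥ^k ⊕ closure(ran(P_{k−1})) ⊕ closure(ran(P_k*)), where Ĥ^k := ker(P_k) ∩ ker(P*_{k−1}) is the harmonic space in degree k: the three subspaces are pairwise orthogonal, each is closed, and their sum is all of H_k. -/
/-!
For a densely defined operator `T`, `ker T† = (ran T)ᗮ`; if `T` is moreover closed, then also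
`ker T = (ran T†)ᗮ` (`pker_eq`), because the graph of `T` equals its double orthogonal complement
in `E ⊕ F`. Writing `A = ran P_{k-1}` and `B = ran P_k†`, the harmonic space is therefore
`Bᗮ ⊓ Aᗮ`, and `P_k ∘ P_{k-1} = 0` says `A ≤ ker P_k = Bᗮ`. The decomposition is then a general
fact about two orthogonal subspaces of a Hilbert space (`inf_orthogonal_sup_closures`).
-/

open LinearMap Submodule

noncomputable section

variable {H : ℕ → Type}
  [∀ k, NormedAddCommGroup (H k)] [∀ k, InnerProductSpace ℂ (H k)]
  [∀ k, CompleteSpace (H k)]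

/-- The kernel of a partially defined operator, as a submodule of the ambient space. -/
def pker {E F : Type} [NormedAddCommGroup E] [InnerProductSpace ℂ E]
    [NormedAddCommGroup F] [InnerProductSpace ℂ F] (T : E →ₗ.[ℂ] F) : Submodule ℂ E :=
  (LinearMap.ker T.toFun).map T.domain.subtype

/-- The range of a partially defined operator. -/
def pran {E F : Type} [NormedAddCommGroup E] [InnerProductSpace ℂ E]
    [NormedAddCommGroup F] [InnerProductSpace ℂ F] (T : E →ₗ.[ℂ] F) : Submodule ℂ F :=
  LinearMap.range T.toFun

/-- `ran(P_{k−1})`, with the convention `P_{−1} = 0`. -/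
def prevRange (P : ∀ k, H k →ₗ.[ℂ] H (k + 1)) : ∀ k, Submodule ℂ (H k)
  | 0 => ⊥
  | (k + 1) => pran (P k)

/-- `ker(P*_{k−1})`, with the convention `P_{−1} = 0` (so that it is everything in degree 0). -/
def prevKerAdj (P : ∀ k, H k →ₗ.[ℂ] H (k + 1)) : ∀ k, Submodule ℂ (H k)
  | 0 => ⊤
  | (k + 1) => pker ((P k).adjoint)

/-- The harmonic space `Ĥ^k = ker(P_k) ∩ ker(P*_{k−1})`. -/
abbrev harmonicSp (P : ∀ k, H k →ₗ.[ℂ] H (k + 1)) (k : ℕ) : Submodule ℂ (H k) :=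
  pker (P k) ⊓ prevKerAdj P k

section Kodaira

variable {E F : Type} [NormedAddCommGroup E] [InnerProductSpace ℂ E]
  [NormedAddCommGroup F] [InnerProductSpace ℂ F]

lemma mem_pker_iff (T : E →ₗ.[ℂ] F) (x : E) :
    x ∈ pker T ↔ ∃ h : x ∈ T.domain, T ⟨x, h⟩ = 0 := by
  constructor
  · rintro ⟨y, hy, rfl⟩
    exact ⟨y.2, hy⟩
  · rintro ⟨h, hx⟩
    exact ⟨⟨x, h⟩, hx, rfl⟩

lemma pker_adjoint_eq [CompleteSpace E] (T : E →ₗ.[ℂ] F)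
    (hT : Dense (T.domain : Set E)) : pker T.adjoint = (pran T)ᗮ := by
  ext y
  rw [mem_pker_iff, Submodule.mem_orthogonal']
  constructor
  · rintro ⟨h, hy⟩ _ ⟨x, rfl⟩
    have := LinearPMap.adjoint_isFormalAdjoint hT ⟨y, h⟩ x
    rw [hy, inner_zero_left] at this
    exact this.symm
  · intro hy
    have h0 : ∀ x : T.domain, inner ℂ (0 : E) (x : E) = inner ℂ y (T x) := fun x => by
      rw [inner_zero_left]
      exact (hy _ ⟨x, rfl⟩).symm
    have h := LinearPMap.mem_adjoint_domain_of_exists y ⟨0, h0⟩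
    exact ⟨h, LinearPMap.adjoint_apply_eq hT ⟨y, h⟩ h0⟩

lemma pker_eq [CompleteSpace E] [CompleteSpace F] (T : E →ₗ.[ℂ] F)
    (hT : Dense (T.domain : Set E)) (hc : T.IsClosed) : pker T = (pran T.adjoint)ᗮ := by
  ext x
  rw [mem_pker_iff, Submodule.mem_orthogonal]
  constructor
  · rintro ⟨h, hx⟩ _ ⟨y, rfl⟩
    have := LinearPMap.adjoint_isFormalAdjoint hT y ⟨x, h⟩
    rw [hx, inner_zero_right] at this
    exact this
  · intro hx
    -- `G` is the graph of `T` inside the Hilbert space `E ⊕ F`; closedness gives `Gᗮᗮ = G`.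
    let e := WithLp.prodContinuousLinearEquiv 2 ℂ E F
    let G : Submodule ℂ (WithLp 2 (E × F)) := T.graph.comap e.toLinearEquiv.toLinearMap
    have hG : IsClosed (G : Set (WithLp 2 (E × F))) := hc.preimage e.continuous
    have hGG : Gᗮᗮ = G := by
      rw [Submodule.orthogonal_orthogonal_eq_closure, hG.submodule_topologicalClosure_eq]
    have hmem : WithLp.toLp 2 (x, (0 : F)) ∈ Gᗮᗮ := by
      rw [Submodule.mem_orthogonal]
      intro u hu
      rw [Submodule.mem_orthogonal'] at hu
      have key : ∀ z : T.domain, inner ℂ (-u.fst) (z : E) = inner ℂ u.snd (T z) := by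
        intro z
        have := hu (WithLp.toLp 2 ((z : E), T z)) (T.mem_graph z)
        rw [WithLp.prod_inner_apply] at this
        rw [inner_neg_left]
        exact neg_eq_of_add_eq_zero_right this
      -- Orthogonality of `u` to `G` means `T† u.snd = -u.fst`.
      have hd := LinearPMap.mem_adjoint_domain_of_exists u.snd ⟨_, key⟩
      have ha := LinearPMap.adjoint_apply_eq hT ⟨u.snd, hd⟩ key
      have h1 := hx _ ⟨⟨u.snd, hd⟩, ha⟩
      rw [inner_neg_left, neg_eq_zero] at h1
      rw [WithLp.prod_inner_apply]
      simpa using h1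
    rw [hGG] at hmem
    obtain ⟨y, hy1, hy2⟩ := (LinearPMap.mem_graph_iff T).1 (show (x, (0 : F)) ∈ T.graph from hmem)
    have hy1' : (y : E) = x := hy1
    subst hy1'
    exact ⟨y.2, hy2⟩

lemma isOrtho_closure_right {K A : Submodule ℂ E} (h : K.IsOrtho A) :
    K.IsOrtho A.topologicalClosure :=
  Submodule.IsOrtho.symm
    (A.topologicalClosure_minimal h.symm (Submodule.isClosed_orthogonal K))

lemma inf_orthogonal_sup_closures [CompleteSpace E] {A B : Submodule ℂ E} (h : A.IsOrtho B) :
    Bᗮ ⊓ Aᗮ ⊔ A.topologicalClosure ⊔ B.topologicalClosure = ⊤ := by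
  have : CompleteSpace A.topologicalClosure := A.isClosed_topologicalClosure.completeSpace_coe
  have : CompleteSpace B.topologicalClosure := B.isClosed_topologicalClosure.completeSpace_coe
  rw [eq_top_iff]
  intro x _
  obtain ⟨p, hp, q, hq, rfl⟩ := A.topologicalClosure.exists_add_mem_mem_orthogonal x
  obtain ⟨r, hr, s, hs, rfl⟩ := B.topologicalClosure.exists_add_mem_mem_orthogonal q
  rw [Submodule.orthogonal_closure] at hq hs
  -- `r` lies in `closure B ≤ Aᗮ`, hence so does `s = (r + s) - r`.
  have hrA : r ∈ Aᗮ := (isOrtho_closure_right h).symm hr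
  have hsA : s ∈ Aᗮ := by simpa using sub_mem hq hrA
  have e : p + (r + s) = s + p + r := by abel
  rw [e]
  exact Submodule.add_mem_sup (Submodule.add_mem_sup ⟨hs, hsA⟩ hp) hr

end Kodaira

/-- Weak Kodaira decomposition: for a Hilbert complex `(H, P)` of length `n`
(densely defined closed differentials with `P_{k+1} ∘ P_k = 0`), in every degree `k ≤ n` the
Hilbert space `H_k` decomposes as the orthogonal direct sum
`H_k = Ĥ^k ⊕ closure(ran P_{k−1}) ⊕ closure(ran P_k*)`:
the three subspaces are pairwise orthogonal, closed, and their sum is all of `H_k`. -/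
theorem weak_kodaira_decomposition
    (n : ℕ) (P : ∀ k, H k →ₗ.[ℂ] H (k + 1))
    (hdense : ∀ k, Dense ((P k).domain : Set (H k)))
    (hclosed : ∀ k, (P k).IsClosed)
    (hsub : ∀ k, ∀ x : (P k).domain, ((P k) x) ∈ (P (k + 1)).domain)
    (hcomp : ∀ k, ∀ x : (P k).domain, P (k + 1) ⟨P k x, hsub k x⟩ = 0)
    (htop : ∀ k, n ≤ k → P k = 0) :
    ∀ k ≤ n,
      (harmonicSp P k).IsOrtho ((prevRange P k).topologicalClosure) ∧
      (harmonicSp P k).IsOrtho ((pran ((P k).adjoint)).topologicalClosure) ∧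
      ((prevRange P k).topologicalClosure).IsOrtho
        ((pran ((P k).adjoint)).topologicalClosure) ∧
      IsClosed ((harmonicSp P k : Set (H k))) ∧
      IsClosed (((prevRange P k).topologicalClosure : Set (H k))) ∧
      IsClosed (((pran ((P k).adjoint)).topologicalClosure : Set (H k))) ∧
      harmonicSp P k ⊔ (prevRange P k).topologicalClosure ⊔
          (pran ((P k).adjoint)).topologicalClosure = ⊤ := by
  intro k _
  have hker : pker (P k) = (pran (P k).adjoint)ᗮ := pker_eq _ (hdense k) (hclosed k)
  have hadj : prevKerAdj P k = (prevRange P k)ᗮ := by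
    cases k with
    | zero => exact Submodule.bot_orthogonal_eq_top.symm
    | succ k => exact pker_adjoint_eq _ (hdense k)
  have hAB : (prevRange P k).IsOrtho (pran (P k).adjoint) := by
    change prevRange P k ≤ _
    rw [← hker]
    cases k with
    | zero => exact bot_le
    | succ k =>
      rintro _ ⟨x, rfl⟩
      exact (mem_pker_iff _ _).2 ⟨hsub k x, hcomp k x⟩
  have hharm : harmonicSp P k = (pran (P k).adjoint)ᗮ ⊓ (prevRange P k)ᗮ := by
    rw [harmonicSp, hker, hadj]
  rw [hharm]
  refine ⟨isOrtho_closure_right inf_le_right, isOrtho_closure_right inf_le_left,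
    isOrtho_closure_right (isOrtho_closure_right hAB.symm).symm, ?_,
    Submodule.isClosed_topologicalClosure _, Submodule.isClosed_topologicalClosure _,
    inf_orthogonal_sup_closures hAB⟩
  exact (Submodule.isClosed_orthogonal _).inter (Submodule.isClosed_orthogonal _)
end
end

section
/- Let (V_•, d_•) be a finite-dimensional Hilbert complex of length n, and for λ ∈ ℝ let E_k(λ) denote the eigenspace of Δ_k for the eigenvalue λ. Then d_k maps E_k(λ) into E_{k+1}(λ) for every λ; and if λ ≠ 0, then d_k restricts to a linear isomorphism from E_k(λ) ∩ ran(d_k†) onto E_{k+1}(λ) ∩ ran(d_k), so that these two subspaces have equal dimension. -/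
/-!
On `ran d_k†` the operator `Δ_k` reduces to `d_k† d_k`, and on `ran d_k` the operator `Δ_{k+1}`
reduces to `d_k d_k†`, because the other summands vanish by `d_{k+1} d_k = 0` and its adjoint.
The same relation gives `d_k Δ_k = d_k d_k† d_k = Δ_{k+1} d_k`, so `d_k` preserves eigenvectors.
For `λ ≠ 0`, on the two subspaces in question `d_k† d_k` and `d_k d_k†` are multiplication
by `λ`, so `λ⁻¹ d_k†` is a two-sided inverse of `d_k`.
-/

open LinearMap Module

noncomputable section

variable {V : ℕ → Type}
  [∀ k, NormedAddCommGroup (V k)] [∀ k, InnerProductSpace ℂ (V k)]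
  [∀ k, FiniteDimensional ℂ (V k)]

/-- The Laplace-type operator `Δ_k = d_k† d_k + d_{k−1} d_{k−1}†` (with `d_{−1} = 0`). -/
noncomputable def Lap (d : ∀ k, V k →ₗ[ℂ] V (k + 1)) : ∀ k, V k →ₗ[ℂ] V k
  | 0 => adjoint (d 0) ∘ₗ d 0
  | (k + 1) => adjoint (d (k + 1)) ∘ₗ d (k + 1) + d k ∘ₗ adjoint (d k)

theorem Lap_comp_adjoint (d : ∀ k, V k →ₗ[ℂ] V (k + 1))
    (hdd : ∀ k, (d (k + 1)).comp (d k) = 0) (k : ℕ) (y : V (k + 1)) :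
    Lap d k (adjoint (d k) y) = adjoint (d k) (d k (adjoint (d k) y)) := by
  cases k with
  | zero => rfl
  | succ k =>
    have h : adjoint (d k) (adjoint (d (k + 1)) y) = 0 := by
      rw [← LinearMap.comp_apply, ← LinearMap.adjoint_comp, hdd]
      simp
    simp [Lap, h]

theorem Lap_succ_comp_d (d : ∀ k, V k →ₗ[ℂ] V (k + 1))
    (hdd : ∀ k, (d (k + 1)).comp (d k) = 0) (k : ℕ) (x : V k) :
    Lap d (k + 1) (d k x) = d k (adjoint (d k) (d k x)) := by
  have h : d (k + 1) (d k x) = 0 := by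
    rw [← LinearMap.comp_apply, hdd, LinearMap.zero_apply]
  simp [Lap, h]

theorem d_comp_Lap (d : ∀ k, V k →ₗ[ℂ] V (k + 1))
    (hdd : ∀ k, (d (k + 1)).comp (d k) = 0) (k : ℕ) (x : V k) :
    d k (Lap d k x) = d k (adjoint (d k) (d k x)) := by
  cases k with
  | zero => rfl
  | succ k =>
    have h : d (k + 1) (d k (adjoint (d k) x)) = 0 := by
      rw [← LinearMap.comp_apply, hdd, LinearMap.zero_apply]
    simp [Lap, h]

theorem eigenspace_isomorphism
    (n : ℕ) (d : ∀ k, V k →ₗ[ℂ] V (k + 1))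
    (hdd : ∀ k, (d (k + 1)).comp (d k) = 0) (hn : d n = 0)
    (k : ℕ) (lam : ℝ) :
    (∀ x ∈ Module.End.eigenspace (Lap d k) (lam : ℂ),
        d k x ∈ Module.End.eigenspace (Lap d (k + 1)) (lam : ℂ)) ∧
    (lam ≠ 0 →
      Set.BijOn (d k)
        ((Module.End.eigenspace (Lap d k) (lam : ℂ) ⊓
            LinearMap.range (adjoint (d k)) : Submodule ℂ (V k)) : Set (V k))
        ((Module.End.eigenspace (Lap d (k + 1)) (lam : ℂ) ⊓
            LinearMap.range (d k) : Submodule ℂ (V (k + 1))) : Set (V (k + 1))) ∧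
      finrank ℂ
          (Module.End.eigenspace (Lap d k) (lam : ℂ) ⊓
            LinearMap.range (adjoint (d k)) : Submodule ℂ (V k))
        = finrank ℂ
          (Module.End.eigenspace (Lap d (k + 1)) (lam : ℂ) ⊓
            LinearMap.range (d k) : Submodule ℂ (V (k + 1)))) := by
  have hmap : ∀ x ∈ Module.End.eigenspace (Lap d k) (lam : ℂ),
      d k x ∈ Module.End.eigenspace (Lap d (k + 1)) (lam : ℂ) := by
    intro x hx
    rw [Module.End.mem_eigenspace_iff] at hx ⊢
    rw [Lap_succ_comp_d d hdd, ← d_comp_Lap d hdd, hx, map_smul]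
  refine ⟨hmap, fun hlam => ?_⟩
  have hl : (lam : ℂ) ≠ 0 := by exact_mod_cast hlam
  have hbij : Set.BijOn (d k)
      ((Module.End.eigenspace (Lap d k) (lam : ℂ) ⊓
          LinearMap.range (adjoint (d k)) : Submodule ℂ (V k)) : Set (V k))
      ((Module.End.eigenspace (Lap d (k + 1)) (lam : ℂ) ⊓
          LinearMap.range (d k) : Submodule ℂ (V (k + 1))) : Set (V (k + 1))) := by
    refine ⟨fun x hx => ⟨hmap x hx.1, x, rfl⟩, ?_, ?_⟩
    · intro x hx u hu heq
      -- The difference `x - u` lies in the subspace and in `ker d_k`, so `λ (x - u) = 0`.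
      obtain ⟨he, y, hy⟩ := Submodule.sub_mem _ hx hu
      have h0 : d k (x - u) = 0 := by rw [map_sub, heq, sub_self]
      have he := Module.End.mem_eigenspace_iff.1 he
      have h1 := Lap_comp_adjoint d hdd k y
      rw [hy, h0, map_zero, he] at h1
      exact sub_eq_zero.1 ((smul_eq_zero.1 h1).resolve_left hl)
    · rintro z ⟨he, w, rfl⟩
      have he := Module.End.mem_eigenspace_iff.1 he
      rw [Lap_succ_comp_d d hdd] at he
      refine ⟨(lam : ℂ)⁻¹ • adjoint (d k) (d k w), ⟨?_, ?_⟩, ?_⟩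
      · refine Submodule.smul_mem _ _ (Module.End.mem_eigenspace_iff.2 ?_)
        rw [Lap_comp_adjoint d hdd, he, map_smul]
      · exact Submodule.smul_mem _ _ ⟨_, rfl⟩
      · rw [map_smul, he, inv_smul_smul₀ hl]
  refine ⟨hbij, LinearEquiv.finrank_eq
    (LinearEquiv.ofBijective ((d k).restrict fun x hx => hbij.mapsTo hx) ?_)⟩
  exact hbij.bijective
end
end
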